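/- Let U = [[a,b],[c,d]] be a unitary 2×2 matrix, let κ₂ ∈ ℝ, and let w_t = κ₂ t + w₀. Consider the time-dependent quantum walk on ℤ with coin sequence U_t = [[a, b e^{i w_t}], [c e^{−i w_t}, d]] and initial state ψ₀(0) = ᵀ(α, β), ψ₀(x) = 0 for x ≠ 0. Then for every t ≥ 0 and every x ∈ ℤ, P(X_t = x) = ‖ ∫₀^{2π} e^{ikx} (R(k)U)^t ᵀ(e^{−i w₀/2} α, e^{i w₀/2} β) dk/(2π) ‖²; that is, this time-dependent walk has at every time the same position distribution as the usual (time-independent) quantum walk with coin U started from the initial state ᵀ(e^{−i w₀/2} α, e^{i w₀/2} β) at the origin. -/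

import Mathlib

open MeasureTheory Complex Filter

noncomputable section

/-- The Konno density function `f_K(x; a)`; only `|a|` matters. -/
def konnoDensity (a x : ℝ) : ℝ :=
  if |x| < |a| then
    Real.sqrt (1 - |a| ^ 2) / (Real.pi * (1 - x ^ 2) * Real.sqrt (|a| ^ 2 - x ^ 2))
  else 0

/-- Time evolution of a time-dependent discrete-time quantum walk on `ℤ`:
`ψ_{t+1}(x) = P_t ψ_t(x+1) + Q_t ψ_t(x-1)`, where `P_t`/`Q_t` are the top/bottom
row parts of the coin `U t`. -/
def QWEvolves (U : ℕ → Matrix (Fin 2) (Fin 2) ℂ) (ψ : ℕ → ℤ → Fin 2 → ℂ) : Prop :=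
  ∀ t : ℕ, ∀ x : ℤ,
    ψ (t + 1) x 0 = U t 0 0 * ψ t (x + 1) 0 + U t 0 1 * ψ t (x + 1) 1 ∧
    ψ (t + 1) x 1 = U t 1 0 * ψ t (x - 1) 0 + U t 1 1 * ψ t (x - 1) 1

/-- Initial state `ψ₀(0) = ᵀ(α, β)`, `ψ₀(x) = 0` for `x ≠ 0`. -/
def QWInit (α β : ℂ) (ψ : ℕ → ℤ → Fin 2 → ℂ) : Prop :=
  ψ 0 0 0 = α ∧ ψ 0 0 1 = β ∧ ∀ x : ℤ, x ≠ 0 → (ψ 0 x 0 = 0 ∧ ψ 0 x 1 = 0)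

/-- `P(X_t = x) = ‖ψ_t(x)‖²`. -/
def qwProb (ψ : ℕ → ℤ → Fin 2 → ℂ) (t : ℕ) (x : ℤ) : ℝ :=
  Complex.normSq (ψ t x 0) + Complex.normSq (ψ t x 1)

/-- The law of `X_t / t`: `μ_t = Σ_{x ∈ ℤ} P(X_t = x) δ_{x/t}`. -/
def qwMeasure (ψ : ℕ → ℤ → Fin 2 → ℂ) (t : ℕ) : Measure ℝ :=
  Measure.sum fun x : ℤ => ENNReal.ofReal (qwProb ψ t x) • Measure.dirac ((x : ℝ) / (t : ℝ))

/-- Weak convergence of `X_t / t` to the law with density `f`. -/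
def qwWeakLimit (ψ : ℕ → ℤ → Fin 2 → ℂ) (f : ℝ → ℝ) : Prop :=
  ∀ g : BoundedContinuousFunction ℝ ℝ,
    Tendsto (fun t : ℕ => ∫ y, g y ∂ qwMeasure ψ t) atTop (nhds (∫ y, g y * f y))

/-- `R(k) = diag(e^{ik}, e^{-ik})`. -/
def Rmat (k : ℝ) : Matrix (Fin 2) (Fin 2) ℂ :=
  !![Complex.exp (Complex.I * k), 0; 0, Complex.exp (-(Complex.I * k))]

/-- The amplitude at time `t` and site `x` of the usual walk with coin `U` started from `v` at the
origin, written as a Fourier integral. -/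
def usualAmplitude (U : Matrix (Fin 2) (Fin 2) ℂ) (v : Fin 2 → ℂ) (t : ℕ) (x : ℤ) (j : Fin 2) : ℂ :=
  ∫ k in (0:ℝ)..(2 * Real.pi),
    Complex.exp (Complex.I * k * x) * (((Rmat k * U) ^ t).mulVec v j) / (2 * Real.pi)

lemma continuous_usualAmplitude_integrand (U : Matrix (Fin 2) (Fin 2) ℂ) (v : Fin 2 → ℂ) (t : ℕ)
    (x : ℤ) (j : Fin 2) :
    Continuous fun k : ℝ =>
      Complex.exp (Complex.I * k * x) * (((Rmat k * U) ^ t).mulVec v j) / (2 * Real.pi) := by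
  have hR : Continuous Rmat := by
    refine continuous_matrix fun i j => ?_
    fin_cases i <;> fin_cases j <;> simp only [Rmat] <;> simp <;> fun_prop
  have hv : Continuous fun k : ℝ => ((Rmat k * U) ^ t).mulVec v :=
    ((hR.matrix_mul continuous_const).pow t).matrix_mulVec continuous_const
  have hvj : Continuous fun k : ℝ => ((Rmat k * U) ^ t).mulVec v j := (continuous_apply j).comp hv
  fun_prop

lemma integral_exp_I_mul_int (x : ℤ) :
    ∫ k in (0:ℝ)..(2 * Real.pi), Complex.exp (Complex.I * k * x) =
      if x = 0 then 2 * (Real.pi : ℂ) else 0 := by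
  split_ifs with hx
  · simp [hx]
  · have hc : Complex.I * (x : ℂ) ≠ 0 := mul_ne_zero Complex.I_ne_zero (Int.cast_ne_zero.mpr hx)
    have h := integral_exp_mul_complex (a := 0) (b := 2 * Real.pi) hc
    have h1 : Complex.exp (Complex.I * x * (2 * Real.pi : ℝ)) = 1 := by
      rw [Complex.exp_eq_one_iff]
      exact ⟨x, by push_cast; ring⟩
    rw [h1] at h
    simp only [mul_right_comm Complex.I _ (x : ℂ)]
    simpa using h

lemma usualAmplitude_zero (U : Matrix (Fin 2) (Fin 2) ℂ) (v : Fin 2 → ℂ) (x : ℤ) (j : Fin 2) :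
    usualAmplitude U v 0 x j = if x = 0 then v j else 0 := by
  have hpi : (Real.pi : ℂ) ≠ 0 := Complex.ofReal_ne_zero.mpr Real.pi_ne_zero
  simp only [usualAmplitude, pow_zero, Matrix.one_mulVec, intervalIntegral.integral_div,
    intervalIntegral.integral_mul_const, integral_exp_I_mul_int]
  split_ifs
  · field_simp
  · simp

lemma usualAmplitude_evolves (U : Matrix (Fin 2) (Fin 2) ℂ) (v : Fin 2 → ℂ) :
    QWEvolves (fun _ => U) (usualAmplitude U v) := by
  intro t x
  have hint (y : ℤ) (j : Fin 2) :=
    (continuous_usualAmplitude_integrand U v t y j).intervalIntegrable (μ := volume) 0 (2 * Real.pi)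
  constructor
  · simp only [usualAmplitude]
    rw [← intervalIntegral.integral_const_mul, ← intervalIntegral.integral_const_mul,
      ← intervalIntegral.integral_add ((hint _ _).const_mul _) ((hint _ _).const_mul _)]
    refine intervalIntegral.integral_congr fun k _ => ?_
    have he : Complex.exp (Complex.I * k * (x + 1 : ℤ)) =
        Complex.exp (Complex.I * k * x) * Complex.exp (Complex.I * k) := by
      rw [← Complex.exp_add]; push_cast; ring_nf
    simp only [he, pow_succ', ← Matrix.mulVec_mulVec]
    generalize ((Rmat k * U) ^ t).mulVec v = u
    simp [Rmat, Matrix.mulVec, dotProduct, Fin.sum_univ_two]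
    ring
  · simp only [usualAmplitude]
    rw [← intervalIntegral.integral_const_mul, ← intervalIntegral.integral_const_mul,
      ← intervalIntegral.integral_add ((hint _ _).const_mul _) ((hint _ _).const_mul _)]
    refine intervalIntegral.integral_congr fun k _ => ?_
    have he : Complex.exp (Complex.I * k * (x - 1 : ℤ)) =
        Complex.exp (Complex.I * k * x) * Complex.exp (-(Complex.I * k)) := by
      rw [← Complex.exp_add]; push_cast; ring_nf
    simp only [he, pow_succ', ← Matrix.mulVec_mulVec]
    generalize ((Rmat k * U) ^ t).mulVec v = u
    simp [Rmat, Matrix.mulVec, dotProduct, Fin.sum_univ_two]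
    ring

/-- A gauge transformation takes the walk whose coin phase is affine in time to the usual walk. -/
lemma usualAmplitude_eq_phase_mul {a b c d α β : ℂ} {κ w₀ : ℝ} {w : ℕ → ℝ}
    (hw : ∀ t : ℕ, w t = κ * t + w₀) {ψ : ℕ → ℤ → Fin 2 → ℂ} (hinit : QWInit α β ψ)
    (hevol : QWEvolves
      (fun t => !![a, b * Complex.exp (Complex.I * (w t));
                   c * Complex.exp (-(Complex.I * (w t))), d]) ψ) (t : ℕ) :
    ∀ x : ℤ,
      usualAmplitude !![a, b; c, d]
          ![Complex.exp (-(Complex.I * (w 0 / 2))) * α, Complex.exp (Complex.I * (w 0 / 2)) * β]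
          t x 0 = Complex.exp (((-(κ * x + w t) / 2 : ℝ) : ℂ) * Complex.I) * ψ t x 0 ∧
      usualAmplitude !![a, b; c, d]
          ![Complex.exp (-(Complex.I * (w 0 / 2))) * α, Complex.exp (Complex.I * (w 0 / 2)) * β]
          t x 1 = Complex.exp ((((-(κ * x) + w t) / 2 : ℝ) : ℂ) * Complex.I) * ψ t x 1 := by
  induction t with
  | zero =>
    intro x
    obtain ⟨h0, h1, hne⟩ := hinit
    simp only [usualAmplitude_zero]
    by_cases hx : x = 0
    · subst hx
      simp only [if_true, h0, h1, Matrix.cons_val_zero, Matrix.cons_val_one]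
      constructor <;> congr 2 <;> push_cast <;> ring
    · simp [hx, hne x hx]
  | succ t ih =>
    intro x
    obtain ⟨hu0, hu1⟩ := usualAmplitude_evolves !![a, b; c, d]
      ![Complex.exp (-(Complex.I * (w 0 / 2))) * α, Complex.exp (Complex.I * (w 0 / 2)) * β] t x
    obtain ⟨hψ0, hψ1⟩ := hevol t x
    have hwt : w (t + 1) = w t + κ := by rw [hw, hw]; push_cast; ring
    rw [hu0, hu1, hψ0, hψ1, (ih _).1, (ih _).2, (ih _).1, (ih _).2, hwt]
    simp only [Matrix.of_apply, Matrix.cons_val', Matrix.cons_val_zero, Matrix.cons_val_one,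
      Matrix.cons_val_fin_one]
    have e1 : Complex.exp (((-(κ * (x + 1 : ℤ) + w t) / 2 : ℝ) : ℂ) * Complex.I) =
        Complex.exp (((-(κ * x + (w t + κ)) / 2 : ℝ) : ℂ) * Complex.I) := by
      congr 1; push_cast; ring
    have e2 : Complex.exp ((((-(κ * (x + 1 : ℤ)) + w t) / 2 : ℝ) : ℂ) * Complex.I) =
        Complex.exp (((-(κ * x + (w t + κ)) / 2 : ℝ) : ℂ) * Complex.I) *
          Complex.exp (Complex.I * w t) := by
      rw [← Complex.exp_add]; congr 1; push_cast; ring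
    have e3 : Complex.exp (((-(κ * (x - 1 : ℤ) + w t) / 2 : ℝ) : ℂ) * Complex.I) =
        Complex.exp ((((-(κ * x) + (w t + κ)) / 2 : ℝ) : ℂ) * Complex.I) *
          Complex.exp (-(Complex.I * w t)) := by
      rw [← Complex.exp_add]; congr 1; push_cast; ring
    have e4 : Complex.exp ((((-(κ * (x - 1 : ℤ)) + w t) / 2 : ℝ) : ℂ) * Complex.I) =
        Complex.exp ((((-(κ * x) + (w t + κ)) / 2 : ℝ) : ℂ) * Complex.I) := by
      congr 1; push_cast; ring
    rw [e1, e2, e3, e4]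
    constructor <;> ring

/-- Case 2 reduces to the usual walk: the position distribution of the walk with coin
`U_t = [[a, b e^{iw_t}], [c e^{-iw_t}, d]]`, `w_t = κ₂ t + w₀`, coincides at every
time with that of the usual walk with coin `U` and initial state
`ᵀ(e^{-iw₀/2} α, e^{iw₀/2} β)` at the origin. -/
theorem case2_QW_equals_usual_walk
    (a b c d : ℂ) (U : Matrix (Fin 2) (Fin 2) ℂ) (hU : U = !![a, b; c, d])
    (hunit : Matrix.conjTranspose U * U = 1)
    (κ₂ w₀ : ℝ) (w : ℕ → ℝ) (hw : ∀ t : ℕ, w t = κ₂ * t + w₀)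
    (α β : ℂ) (hαβ : Complex.normSq α + Complex.normSq β = 1)
    (ψ : ℕ → ℤ → Fin 2 → ℂ)
    (hinit : QWInit α β ψ)
    (hevol : QWEvolves
      (fun t => !![a, b * Complex.exp (Complex.I * (w t));
                   c * Complex.exp (-(Complex.I * (w t))), d]) ψ) :
    ∀ t : ℕ, ∀ x : ℤ,
      qwProb ψ t x =
        Complex.normSq (∫ k in (0:ℝ)..(2 * Real.pi),
          Complex.exp (Complex.I * k * x) *
            (((Rmat k * U) ^ t).mulVec
              ![Complex.exp (-(Complex.I * (w 0 / 2))) * α,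
                Complex.exp (Complex.I * (w 0 / 2)) * β] 0) / (2 * Real.pi)) +
        Complex.normSq (∫ k in (0:ℝ)..(2 * Real.pi),
          Complex.exp (Complex.I * k * x) *
            (((Rmat k * U) ^ t).mulVec
              ![Complex.exp (-(Complex.I * (w 0 / 2))) * α,
                Complex.exp (Complex.I * (w 0 / 2)) * β] 1) / (2 * Real.pi)) := by
  intro t x
  obtain ⟨h0, h1⟩ := usualAmplitude_eq_phase_mul hw hinit hevol t x
  rw [usualAmplitude] at h0 h1
  rw [hU, h0, h1]
  simp [qwProb, Complex.normSq_eq_norm_sq, -Complex.ofReal_div, Complex.norm_exp_ofReal_mul_I]
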